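/- Most permissiveness of the exact prophecy annotation: Let φ be a specification and A = (Q, q0, δ, safe(F)) a deterministic safety automaton over Σ with L(A) = L(φ), and let κ* be the exact prophecy annotation of A. Then the prophecy-annotated controller (A, κ*) is most permissive for every plant M_p ∈ ℙ: every controller M_c ∈ ℂ with M_p ∥ M_c ⊨ φ satisfies M_c ⊨ (A, κ*) ∥ M_p. -/

import Mathlib

/-- A Moore machine over atomic propositions `AP`, with input propositions `I ⊆ AP`
and output propositions `O ⊆ AP`.  Letters in `2^I` are encoded as sets `σ : Set AP`
where the transition function is invariant under intersecting with `I`, and the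
output labeling produces subsets of `O`. -/
structure Moore (AP : Type) (I O : Set AP) : Type 1 where
  S : Type
  fin : Finite S
  s0 : S
  tr : S → Set AP → S
  out : S → Set AP
  tr_inv : ∀ s σ, tr s σ = tr s (σ ∩ I)
  out_sub : ∀ s, out s ⊆ O

namespace Moore

variable {AP : Type} {I O : Set AP}

/-- `M.at' s` is `M` with initial state replaced by `s` (written `M(s)` in the paper). -/
def at' (M : Moore AP I O) (s : M.S) : Moore AP I O :=
  { M with s0 := s }

/-- The run of `M` on an infinite word `γ`: at step `j` the machine reads input `γ j ∩ I`. -/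
def run (M : Moore AP I O) (γ : ℕ → Set AP) : ℕ → M.S
  | 0 => M.s0
  | j + 1 => M.tr (M.run γ j) (γ j ∩ I)

/-- `Traces(M)`: all `γ` whose `O`-component agrees with the outputs along the run of `M`. -/
def Traces (M : Moore AP I O) : Set (ℕ → Set AP) :=
  { γ | ∀ j, γ j ∩ O = M.out (M.run γ j) }

end Moore

/-- Parallel composition `M1 ∥ M2` of Moore machines of two distinct processes. -/
def par {AP : Type} {I1 O1 I2 O2 : Set AP} (M1 : Moore AP I1 O1) (M2 : Moore AP I2 O2) :
    Moore AP ((I1 ∪ I2) \ (O1 ∪ O2)) (O1 ∪ O2) where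
  S := M1.S × M2.S
  fin := by haveI := M1.fin; haveI := M2.fin; exact inferInstance
  s0 := (M1.s0, M2.s0)
  tr p σ :=
    (M1.tr p.1 ((σ ∩ ((I1 ∪ I2) \ (O1 ∪ O2)) ∪ M2.out p.2) ∩ I1),
     M2.tr p.2 ((σ ∩ ((I1 ∪ I2) \ (O1 ∪ O2)) ∪ M1.out p.1) ∩ I2))
  out p := M1.out p.1 ∪ M2.out p.2
  tr_inv := by intro s σ; simp [Set.inter_assoc]
  out_sub p := Set.union_subset_union (M1.out_sub p.1) (M2.out_sub p.2)

/-- A deterministic safety automaton `A = (Q, q0, δ, safe(F))` over alphabet `2^AP`. -/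
structure DSA (AP : Type) : Type 1 where
  Q : Type
  fin : Finite Q
  q0 : Q
  δ : Q → Set AP → Q
  F : Set Q

namespace DSA

variable {AP : Type}

/-- The run of `A` from state `q` on the infinite word `γ`. -/
def run (A : DSA AP) (q : A.Q) (γ : ℕ → Set AP) : ℕ → A.Q
  | 0 => q
  | i + 1 => A.δ (A.run q γ i) (γ i)

/-- `L(A)`: all words whose run from `q0` stays in the safe states `F`. -/
def Lang (A : DSA AP) : Set (ℕ → Set AP) :=
  { γ | ∀ i, A.run A.q0 γ i ∈ A.F }

end DSA

/-- `Runs(A, q, M) ⊆ safe(F)`: every run of `A` from `q` on a trace of `M` stays in `F`. -/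
def SafeRuns {AP : Type} {I O : Set AP} (A : DSA AP) (q : A.Q) (M : Moore AP I O) : Prop :=
  ∀ γ ∈ M.Traces, ∀ i, A.run q γ i ∈ A.F

/-- `M_c ⊨ (A(q), κ) ∥ M_p`: the controller `M_c` is consistent with the
prophecy-annotated controller `(A(q), κ)` w.r.t. the plant `M_p`: at every
reachable triple of the product of `A` (started at `q`) with `M_c ∥ M_p`,
the residual plant satisfies the prophecy for the current controller output. -/
def Consistent {AP : Type} (Oe Oc Op : Set AP) (A : DSA AP) (q : A.Q)
    (κ : A.Q → Set AP → Set (Moore AP (Oe ∪ Oc) Op))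
    (Mc : Moore AP (Oe ∪ Op) Oc) (Mp : Moore AP (Oe ∪ Oc) Op) : Prop :=
  ∀ γ ∈ (par Mc Mp).Traces, ∀ i,
    Mp.at' ((par Mc Mp).run γ i).2 ∈
      κ (A.run q γ i) (Mc.out ((par Mc Mp).run γ i).1)

/-- `(A, κ)` is correct for the plant `M_p` w.r.t. the specification `φ`. -/
def CorrectFor {AP : Type} (Oe Oc Op : Set AP) (A : DSA AP)
    (κ : A.Q → Set AP → Set (Moore AP (Oe ∪ Oc) Op))
    (φ : Set (ℕ → Set AP)) (Mp : Moore AP (Oe ∪ Oc) Op) : Prop :=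
  ∀ Mc : Moore AP (Oe ∪ Op) Oc,
    Consistent Oe Oc Op A A.q0 κ Mc Mp → (par Mp Mc).Traces ⊆ φ

/-- `(A, κ)` is most permissive for the plant `M_p` w.r.t. the specification `φ`. -/
def MostPermissiveFor {AP : Type} (Oe Oc Op : Set AP) (A : DSA AP)
    (κ : A.Q → Set AP → Set (Moore AP (Oe ∪ Oc) Op))
    (φ : Set (ℕ → Set AP)) (Mp : Moore AP (Oe ∪ Oc) Op) : Prop :=
  ∀ Mc : Moore AP (Oe ∪ Op) Oc,
    (par Mp Mc).Traces ⊆ φ → Consistent Oe Oc Op A A.q0 κ Mc Mp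

/-- `X` is a safe controllable region of the safety game of `A` and `M_p`:
`X ⊆ F × S^p`, and from every `(q,s) ∈ X` some controller output `α ⊆ O_c`
keeps the game in `X` for every environment output `β ⊆ O_e`. -/
def WinStep {AP : Type} (Oe Oc Op : Set AP) (A : DSA AP)
    (Mp : Moore AP (Oe ∪ Oc) Op) (X : Set (A.Q × Mp.S)) : Prop :=
  (∀ p ∈ X, p.1 ∈ A.F) ∧
    ∀ p ∈ X, ∃ α ⊆ Oc, ∀ β ⊆ Oe,
      (A.δ p.1 (α ∪ β ∪ Mp.out p.2), Mp.tr p.2 (α ∪ β)) ∈ X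

/-- The winning region of the safety game of `A` and `M_p`: the largest
(safe controllable) set `X` with `WinStep`, i.e. the union of all of them. -/
def Win {AP : Type} (Oe Oc Op : Set AP) (A : DSA AP)
    (Mp : Moore AP (Oe ∪ Oc) Op) : Set (A.Q × Mp.S) :=
  ⋃₀ { X | WinStep Oe Oc Op A Mp X }

/-- The exact prophecy annotation `κ*` of `A`: all plants for which some
controller with initial output `α` keeps every run of `A` from `q` inside `F`. -/
def κStar {AP : Type} (Oe Oc Op : Set AP) (A : DSA AP) (q : A.Q) (α : Set AP) :
    Set (Moore AP (Oe ∪ Oc) Op) :=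
  { Mp | ∃ Mc : Moore AP (Oe ∪ Op) Oc, Mc.out Mc.s0 = α ∧ SafeRuns A q (par Mp Mc) }

/-- `Add_{M_p}(q, α)`: the residual plants `M_p(s)` such that `q ∈ F` and output `α`
leads into the winning region for every environment output `β ⊆ O_e`. -/
def AddSet {AP : Type} (Oe Oc Op : Set AP) (A : DSA AP)
    (Mp : Moore AP (Oe ∪ Oc) Op) (q : A.Q) (α : Set AP) :
    Set (Moore AP (Oe ∪ Oc) Op) :=
  { M | ∃ s : Mp.S, M = Mp.at' s ∧ q ∈ A.F ∧
      ∀ β ⊆ Oe, (A.δ q (α ∪ β ∪ Mp.out s), Mp.tr s (α ∪ β)) ∈ Win Oe Oc Op A Mp }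

/-- `Rem_{M_p}(q, α)`: the residual plants `M_p(s)` such that output `α` leaves the
winning region for some environment output `β ⊆ O_e`. -/
def RemSet {AP : Type} (Oe Oc Op : Set AP) (A : DSA AP)
    (Mp : Moore AP (Oe ∪ Oc) Op) (q : A.Q) (α : Set AP) :
    Set (Moore AP (Oe ∪ Oc) Op) :=
  { M | ∃ s : Mp.S, M = Mp.at' s ∧
      ∃ β ⊆ Oe, (A.δ q (α ∪ β ∪ Mp.out s), Mp.tr s (α ∪ β)) ∉ Win Oe Oc Op A Mp }

/-!
While a composition of machines is run alongside the automaton, each step preserves the property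
that all remaining automaton runs are safe, because prepending the letter just read to a trace of
the residual composition gives a trace of the original one. Hence at a reachable triple the
residual controller itself witnesses that the residual plant lies in the exact prophecy.
-/

theorem DSA.run_cons_succ {AP : Type} (A : DSA AP) (q : A.Q) (a : Set AP) (γ : ℕ → Set AP)
    (j : ℕ) : A.run q (Stream'.cons a γ) (j + 1) = A.run (A.δ q a) γ j := by
  induction j with
  | zero => rfl
  | succ j ih => exact congrArg (A.δ · (γ j)) ih

namespace Moore

variable {AP : Type} {I O I' O' : Set AP}

theorem run_succ (M : Moore AP I O) (γ : ℕ → Set AP) (j : ℕ) :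
    M.run γ (j + 1) = M.tr (M.run γ j) (γ j) :=
  (M.tr_inv _ _).symm

theorem run_cons_succ (M : Moore AP I O) (a : Set AP) (γ : ℕ → Set AP) (j : ℕ) :
    M.run (Stream'.cons a γ) (j + 1) = (M.at' (M.tr M.s0 a)).run γ j := by
  induction j with
  | zero => exact M.run_succ _ 0
  | succ j ih => exact congrArg (M.tr · (γ j ∩ I)) ih

theorem cons_mem_traces {M : Moore AP I O} {a : Set AP} {γ : ℕ → Set AP}
    (ha : a ∩ O = M.out M.s0) (hγ : γ ∈ (M.at' (M.tr M.s0 a)).Traces) :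
    Stream'.cons a γ ∈ M.Traces
  | 0 => ha
  | j + 1 => (hγ j).trans (congrArg M.out (M.run_cons_succ a γ j).symm)

theorem map_run {M : Moore AP I O} {N : Moore AP I' O'} (f : M.S → N.S) (hs0 : f M.s0 = N.s0)
    (htr : ∀ s σ, f (M.tr s σ) = N.tr (f s) σ) (γ : ℕ → Set AP) (j : ℕ) :
    f (M.run γ j) = N.run γ j := by
  induction j with
  | zero => exact hs0
  | succ j ih => rw [M.run_succ, N.run_succ, htr, ih]

theorem traces_eq_of_map {M : Moore AP I O} {N : Moore AP I' O'} (f : M.S → N.S)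
    (hs0 : f M.s0 = N.s0) (htr : ∀ s σ, f (M.tr s σ) = N.tr (f s) σ) (hO : O = O')
    (hout : ∀ s, N.out (f s) = M.out s) : M.Traces = N.Traces := by
  subst hO
  ext γ
  refine forall_congr' fun j => ?_
  rw [← map_run f hs0 htr, hout]

end Moore

namespace SafeRuns

variable {AP : Type} {I O : Set AP} {A : DSA AP} {q : A.Q} {M : Moore AP I O}

theorem step (h : SafeRuns A q M) {a : Set AP} (ha : a ∩ O = M.out M.s0) :
    SafeRuns A (A.δ q a) (M.at' (M.tr M.s0 a)) := by
  intro γ hγ j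
  rw [← A.run_cons_succ]
  exact h _ (Moore.cons_mem_traces ha hγ) (j + 1)

theorem at'_run (h : SafeRuns A q M) {γ : ℕ → Set AP} (hγ : γ ∈ M.Traces) (i : ℕ) :
    SafeRuns A (A.run q γ i) (M.at' (M.run γ i)) := by
  induction i with
  | zero => exact h
  | succ i ih =>
    rw [M.run_succ]
    exact ih.step (hγ i)

end SafeRuns

theorem safeRuns_q0_iff_traces_subset_lang {AP : Type} {I O : Set AP} {A : DSA AP}
    {M : Moore AP I O} : SafeRuns A A.q0 M ↔ M.Traces ⊆ A.Lang :=
  Iff.rfl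

section ParComm

variable {AP : Type} {I₁ O₁ I₂ O₂ : Set AP} (M₁ : Moore AP I₁ O₁) (M₂ : Moore AP I₂ O₂)

theorem swap_tr_par (p : M₁.S × M₂.S) (σ : Set AP) :
    ((par M₁ M₂).tr p σ).swap = (par M₂ M₁).tr p.swap σ := by
  simp only [par, Prod.fst_swap, Prod.snd_swap, Prod.swap_prod_mk, Set.union_comm I₂ I₁,
    Set.union_comm O₂ O₁]

theorem swap_run_par (γ : ℕ → Set AP) (j : ℕ) :
    ((par M₁ M₂).run γ j).swap = (par M₂ M₁).run γ j :=
  Moore.map_run (M := par M₁ M₂) (N := par M₂ M₁) Prod.swap rfl (swap_tr_par M₁ M₂) γ j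

theorem traces_par_comm : (par M₁ M₂).Traces = (par M₂ M₁).Traces :=
  Moore.traces_eq_of_map (M := par M₁ M₂) (N := par M₂ M₁) Prod.swap rfl (swap_tr_par M₁ M₂)
    (Set.union_comm _ _) fun _ => Set.union_comm _ _

end ParComm

section Prophecy

variable {AP : Type} {Oe Oc Op : Set AP} {A : DSA AP}

theorem SafeRuns.consistent_κStar {q : A.Q} {Mp : Moore AP (Oe ∪ Oc) Op}
    {Mc : Moore AP (Oe ∪ Op) Oc} (h : SafeRuns A q (par Mp Mc)) :
    Consistent Oe Oc Op A q (κStar Oe Oc Op A) Mc Mp := by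
  intro γ hγ i
  refine ⟨Mc.at' ((par Mc Mp).run γ i).1, rfl, ?_⟩
  rw [traces_par_comm] at hγ
  have hsafe := h.at'_run hγ i
  rwa [← swap_run_par Mc Mp] at hsafe

theorem κStar_most_permissive_general {φ : Set (ℕ → Set AP)} (hφ : φ ⊆ A.Lang)
    (Mp : Moore AP (Oe ∪ Oc) Op) :
    MostPermissiveFor Oe Oc Op A (κStar Oe Oc Op A) φ Mp :=
  fun _ hMc => (safeRuns_q0_iff_traces_subset_lang.2 (hMc.trans hφ)).consistent_κStar

end Prophecy

/-- Most permissiveness of the exact prophecy annotation. -/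
theorem κStar_most_permissive
    {AP : Type} [Finite AP] (Oe Oc Op : Set AP)
    (hec : Disjoint Oe Oc) (hep : Disjoint Oe Op) (hcp : Disjoint Oc Op)
    (hcov : Oe ∪ Oc ∪ Op = Set.univ)
    (φ : Set (ℕ → Set AP)) (A : DSA AP) (hL : A.Lang = φ) :
    ∀ Mp : Moore AP (Oe ∪ Oc) Op,
      MostPermissiveFor Oe Oc Op A (κStar Oe Oc Op A) φ Mp :=
  κStar_most_permissive_general hL.ge
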